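/- arXiv:2205.09547 — 4 statements merged into one kernel-verified Lean document; each statement's English description precedes it below -/
import Mathlib

section
/- Let w be a nonzero valid chipsplitting outcome whose positive support supp⁺(w) has at most 2 elements. Then supp⁺(w) = {(1,0), (0,1)}. -/
/-- The splitting-move vector at a grid point `p = (i,j)`:
`δ_{(i+1,j)} + δ_{(i,j+1)} − δ_{(i,j)}`. -/
noncomputable def splitMove (p : ℕ × ℕ) : (ℕ × ℕ) →₀ ℤ :=
  Finsupp.single (p.1 + 1, p.2) 1 + Finsupp.single (p.1, p.2 + 1) 1 - Finsupp.single p 1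

/-- A chip configuration is a chipsplitting outcome if it lies in the additive subgroup
generated by all splitting-move vectors. -/
def IsOutcome (w : (ℕ × ℕ) →₀ ℤ) : Prop :=
  w ∈ AddSubgroup.closure (Set.range splitMove)

/-- A chip configuration is valid if its negative support is contained in `{(0,0)}`. -/
def IsValid (w : (ℕ × ℕ) →₀ ℤ) : Prop :=
  ∀ p : ℕ × ℕ, w p < 0 → p = (0, 0)

/-!
Read a configuration `w` as the polynomial `∑ w (i, j) xⁱ yʲ`. A splitting move becomes
`xⁱ yʲ (x + y - 1)`, so outcomes vanish on the line `x + y = 1`. Positivity of the monomials at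
`(1/2, 1/2)` forces a nonzero valid outcome to be negative at the origin; vanishing at `(0, 1)` and
`(1, 0)` then gives positive entries at some `(0, j)` and `(k, 0)`. If these are the only ones, the
values at `(0, 1)` and `(1, 0)` show that the polynomial is a multiple of `1 - xᵏ - yʲ`, and its
value at `(1/2, 1/2)` leaves only `j = k = 1`.
-/

section evalAt

variable {R : Type*} [CommRing R]

/-- The value at `(x, y)` of the polynomial `∑ w (i, j) xⁱ yʲ` attached to a chip configuration
`w`, as a `ℤ`-linear map in `w`. -/
noncomputable def evalAt (x y : R) : ((ℕ × ℕ) →₀ ℤ) →ₗ[ℤ] R :=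
  Finsupp.linearCombination ℤ fun p : ℕ × ℕ => x ^ p.1 * y ^ p.2

lemma evalAt_apply (x y : R) (w : (ℕ × ℕ) →₀ ℤ) :
    evalAt x y w = ∑ p ∈ w.support, (w p : R) * (x ^ p.1 * y ^ p.2) := by
  simp only [evalAt, Finsupp.linearCombination_apply, Finsupp.sum, zsmul_eq_mul]

lemma evalAt_splitMove (x y : R) (p : ℕ × ℕ) :
    evalAt x y (splitMove p) = x ^ p.1 * y ^ p.2 * (x + y - 1) := by
  simp only [evalAt, splitMove, map_sub, map_add, Finsupp.linearCombination_single, one_smul]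
  ring

lemma IsOutcome.evalAt_eq_zero {w : (ℕ × ℕ) →₀ ℤ} (hw : IsOutcome w) {x y : R}
    (hxy : x + y = 1) : evalAt x y w = 0 := by
  suffices AddSubgroup.closure (Set.range splitMove) ≤ (evalAt x y).toAddMonoidHom.ker from this hw
  rw [AddSubgroup.closure_le]
  rintro _ ⟨p, rfl⟩
  change evalAt x y (splitMove p) = 0
  rw [evalAt_splitMove, hxy, sub_self, mul_zero]

lemma evalAt_of_support_subset {w : (ℕ × ℕ) →₀ ℤ} {j k : ℕ} (hj : j ≠ 0) (hk : k ≠ 0)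
    (hs : w.support ⊆ {(0, 0), (0, j), (k, 0)}) (x y : R) :
    evalAt x y w = w (0, 0) + w (0, j) * y ^ j + w (k, 0) * x ^ k := by
  rw [evalAt, Finsupp.linearCombination_apply, Finsupp.sum_of_support_subset _ hs _ (by simp),
    Finset.sum_insert (by simp [hj.symm, hk.symm]), Finset.sum_pair (by simp [hj])]
  simp [add_assoc]

end evalAt

namespace IsOutcome

variable {w : (ℕ × ℕ) →₀ ℤ}

lemma exists_pos_of_monomial_pos {R : Type*} [CommRing R] [LinearOrder R] [IsStrictOrderedRing R]
    (hw : IsOutcome w) {x y : R} (hx : 0 ≤ x) (hy : 0 ≤ y) (hxy : x + y = 1) {q : ℕ × ℕ}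
    (hq : w q ≠ 0) (hmon : 0 < x ^ q.1 * y ^ q.2) :
    ∃ p, 0 < w p ∧ 0 < x ^ p.1 * y ^ p.2 := by
  have hsum := hw.evalAt_eq_zero hxy
  rw [evalAt_apply] at hsum
  obtain ⟨p, -, hp⟩ := Finset.exists_pos_of_sum_zero_of_exists_nonzero _ hsum
    ⟨q, Finsupp.mem_support_iff.2 hq, mul_ne_zero (Int.cast_ne_zero.2 hq) hmon.ne'⟩
  have hwp : (0 : R) < w p := pos_of_mul_pos_left hp (by positivity)
  exact ⟨p, Int.cast_pos.1 hwp, pos_of_mul_pos_right hp hwp.le⟩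

lemma exists_pos (hw : IsOutcome w) (hne : w ≠ 0) : ∃ p, 0 < w p := by
  obtain ⟨q, hq⟩ := DFunLike.ne_iff.1 hne
  obtain ⟨p, hp, -⟩ := hw.exists_pos_of_monomial_pos (x := (1 / 2 : ℚ)) (y := 1 / 2)
    (by norm_num) (by norm_num) (by norm_num) hq (by positivity)
  exact ⟨p, hp⟩

lemma exists_neg (hw : IsOutcome w) (hne : w ≠ 0) : ∃ p, w p < 0 := by
  have hneg : IsOutcome (-w) := neg_mem hw
  simpa using hneg.exists_pos (neg_ne_zero.2 hne)

lemma exists_pos_zero_left (hw : IsOutcome w) {j : ℕ} (hj : w (0, j) ≠ 0) :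
    ∃ j', 0 < w (0, j') := by
  obtain ⟨⟨i, j'⟩, hpos, hmon⟩ := hw.exists_pos_of_monomial_pos (x := (0 : ℤ)) (y := 1)
    le_rfl zero_le_one (zero_add 1) hj (by simp)
  obtain rfl : i = 0 := by
    by_contra hi
    simp [hi] at hmon
  exact ⟨j', hpos⟩

lemma exists_pos_zero_right (hw : IsOutcome w) {i : ℕ} (hi : w (i, 0) ≠ 0) :
    ∃ i', 0 < w (i', 0) := by
  obtain ⟨⟨i', j⟩, hpos, hmon⟩ := hw.exists_pos_of_monomial_pos (x := (1 : ℤ)) (y := 0)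
    zero_le_one le_rfl (add_zero 1) hi (by simp)
  obtain rfl : j = 0 := by
    by_contra hj
    simp [hj] at hmon
  exact ⟨i', hpos⟩

end IsOutcome

lemma eq_one_of_half_pow_add_half_pow_eq_one {K : Type*} [Field K] [LinearOrder K]
    [IsStrictOrderedRing K] {m n : ℕ} (h : (1 / 2 : K) ^ m + (1 / 2) ^ n = 1) :
    m = 1 ∧ n = 1 := by
  have hpos : (0 : K) < 1 / 2 := one_half_pos
  have hlt : (1 / 2 : K) < 1 := one_half_lt_one
  have hm : (1 / 2 : K) ^ m ≤ 1 / 2 := by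
    refine pow_le_of_le_one hpos.le hlt.le ?_
    rintro rfl
    linarith [pow_pos hpos n]
  have hn : (1 / 2 : K) ^ n ≤ 1 / 2 := by
    refine pow_le_of_le_one hpos.le hlt.le ?_
    rintro rfl
    linarith [pow_pos hpos m]
  have hinj := pow_right_injective₀ hpos hlt.ne
  exact ⟨hinj (by simp only [pow_one]; linarith), hinj (by simp only [pow_one]; linarith)⟩

lemma IsOutcome.eq_one_of_support_subset {w : (ℕ × ℕ) →₀ ℤ} (hw : IsOutcome w)
    (h0 : w (0, 0) ≠ 0) {j k : ℕ} (hj : j ≠ 0) (hk : k ≠ 0)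
    (hs : w.support ⊆ {(0, 0), (0, j), (k, 0)}) : j = 1 ∧ k = 1 := by
  have hline {x y : ℚ} (hxy : x + y = 1) :
      (w (0, 0) : ℚ) + w (0, j) * y ^ j + w (k, 0) * x ^ k = 0 := by
    rw [← evalAt_of_support_subset hj hk hs, hw.evalAt_eq_zero hxy]
  have hcol : (w (0, j) : ℚ) = -w (0, 0) := by
    have := hline (zero_add 1)
    simp only [one_pow, zero_pow hk] at this
    linarith
  have hrow : (w (k, 0) : ℚ) = -w (0, 0) := by
    have := hline (add_zero 1)
    simp only [one_pow, zero_pow hj] at this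
    linarith
  have hhalf := hline (add_halves 1)
  rw [hcol, hrow] at hhalf
  refine eq_one_of_half_pow_add_half_pow_eq_one (K := ℚ) ?_
  refine mul_left_cancel₀ (Int.cast_ne_zero.2 h0 : (w (0, 0) : ℚ) ≠ 0) ?_
  linear_combination -hhalf

namespace IsValid

variable {w : (ℕ × ℕ) →₀ ℤ}

lemma apply_zero_neg (hv : IsValid w) (hw : IsOutcome w) (hne : w ≠ 0) : w (0, 0) < 0 := by
  obtain ⟨p, hp⟩ := hw.exists_neg hne
  exact hv p hp ▸ hp

lemma support_subset (hv : IsValid w) :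
    (w.support : Set (ℕ × ℕ)) ⊆ insert (0, 0) {p | 0 < w p} := by
  intro p hp
  rcases (Finsupp.mem_support_iff.1 hp).lt_or_gt with hneg | hpos
  · exact Or.inl (hv p hneg)
  · exact Or.inr hpos

end IsValid

theorem stmt_4 (w : (ℕ × ℕ) →₀ ℤ) (hw : IsOutcome w) (hv : IsValid w) (hne : w ≠ 0)
    (hcard : {p : ℕ × ℕ | 0 < w p}.ncard ≤ 2) :
    {p : ℕ × ℕ | 0 < w p} = {(1, 0), (0, 1)} := by
  have h0 : w (0, 0) < 0 := hv.apply_zero_neg hw hne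
  obtain ⟨j, hjpos⟩ := hw.exists_pos_zero_left h0.ne
  obtain ⟨k, hkpos⟩ := hw.exists_pos_zero_right h0.ne
  have hj : j ≠ 0 := by rintro rfl; exact h0.not_gt hjpos
  have hk : k ≠ 0 := by rintro rfl; exact h0.not_gt hkpos
  have hfin : {p | 0 < w p}.Finite :=
    w.support.finite_toSet.subset fun p hp => Finsupp.mem_support_iff.2 (ne_of_gt hp)
  have hpair : {(0, j), (k, 0)} = {p | 0 < w p} :=
    Set.eq_of_subset_of_ncard_le (Set.pair_subset hjpos hkpos)
      (by rwa [Set.ncard_pair (by simp [hj])]) hfin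
  have hs : w.support ⊆ {(0, 0), (0, j), (k, 0)} := by
    simpa only [← hpair, ← Finset.coe_pair, ← Finset.coe_insert, Finset.coe_subset]
      using hv.support_subset
  obtain ⟨rfl, rfl⟩ := hw.eq_one_of_support_subset h0.ne hj hk hs
  rw [← hpair, Set.pair_comm]
end

section
/- Let e ∈ ℕ and let w be a chipsplitting outcome with supp(w) ⊆ V_e, i.e., every (i,j) ∈ supp(w) satisfies i + j ≤ e. Then the alternating sum along the top diagonal vanishes: ∑_{k=0}^{e} (−1)^k·w(k, e−k) = 0. -/
/-!
Sending `δ_{(i,j)}` to `(1 - X)^i * X^j` kills every splitting move, because `(1 - X) + X = 1`.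
Hence an outcome `w` satisfies `∑ w (i, j) (1 - X)^i X^j = 0` in `ℤ[X]`. When `w` is supported in
`i + j ≤ e`, only the diagonal `i + j = e` contributes to the coefficient of `X^e`, and there
`(1 - X)^k X^(e-k)` has leading coefficient `(-1)^k`.
-/

open Polynomial
open Finset.HasAntidiagonal (antidiagonal mem_antidiagonal)

namespace IsOutcome

theorem linearCombination_eq_zero {M : Type*} [AddCommGroup M] {f : ℕ × ℕ → M}
    {w : (ℕ × ℕ) →₀ ℤ} (hw : IsOutcome w)
    (hf : ∀ i j, f (i + 1, j) + f (i, j + 1) = f (i, j)) :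
    Finsupp.linearCombination ℤ f w = 0 := by
  have moves_le_ker : AddSubgroup.closure (Set.range splitMove) ≤
      (Finsupp.linearCombination ℤ f).toAddMonoidHom.ker := by
    rw [AddSubgroup.closure_le]
    rintro _ ⟨⟨i, j⟩, rfl⟩
    simp [splitMove, hf]
  exact moves_le_ker hw

theorem linearCombination_pow_mul_pow_eq_zero {R : Type*} [Ring R] {x y : R} (hxy : x + y = 1)
    {w : (ℕ × ℕ) →₀ ℤ} (hw : IsOutcome w) :
    Finsupp.linearCombination ℤ (fun p : ℕ × ℕ ↦ x ^ p.1 * y ^ p.2) w = 0 :=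
  hw.linearCombination_eq_zero fun i j ↦
    calc x ^ (i + 1) * y ^ j + x ^ i * y ^ (j + 1)
        = x ^ i * (x + y) * y ^ j := by rw [pow_succ, pow_succ']; noncomm_ring
      _ = x ^ i * y ^ j := by rw [hxy, mul_one]

end IsOutcome

section Coefficients

variable {R : Type*} [Ring R]

theorem natDegree_one_sub_X_le : (1 - X : R[X]).natDegree ≤ 1 := by
  compute_degree

theorem coeff_one_sub_X_pow_mul_X_pow_add (i j : ℕ) :
    ((1 - X : R[X]) ^ i * X ^ j).coeff (i + j) = (-1) ^ i := by
  have leading : ((1 - X : R[X]) ^ i).coeff (i * 1) = (1 - X : R[X]).coeff 1 ^ i :=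
    coeff_pow_of_natDegree_le natDegree_one_sub_X_le
  simpa [coeff_mul_X_pow, coeff_one] using leading

theorem coeff_one_sub_X_pow_mul_X_pow_of_add_lt {i j e : ℕ} (h : i + j < e) :
    ((1 - X : R[X]) ^ i * X ^ j).coeff e = 0 := by
  have degree_le : ((1 - X : R[X]) ^ i * X ^ j).natDegree ≤ i * 1 + j :=
    natDegree_mul_le_of_le (natDegree_pow_le_of_le i natDegree_one_sub_X_le) (natDegree_X_pow_le j)
  exact coeff_eq_zero_of_natDegree_lt (by omega)

end Coefficients

theorem linearCombination_eq_sum_antidiagonal {A R M : Type*} [AddMonoid A] [PartialOrder A]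
    [Finset.HasAntidiagonal A] [Semiring R] [AddCommMonoid M] [Module R M] {e : A}
    {f : A × A → M} {w : (A × A) →₀ R} (hf : ∀ p : A × A, p.1 + p.2 < e → f p = 0)
    (hw : ∀ p : A × A, w p ≠ 0 → p.1 + p.2 ≤ e) :
    Finsupp.linearCombination R f w = ∑ p ∈ antidiagonal e, w p • f p := by
  rw [Finsupp.linearCombination_apply]
  refine Finset.sum_congr_of_eq_on_inter (fun p hp hpe ↦ ?_) (fun p _ hp ↦ ?_) fun _ _ _ ↦ rfl
  · have below : p.1 + p.2 < e :=
      (hw p (Finsupp.mem_support_iff.mp hp)).lt_of_ne (mt mem_antidiagonal.mpr hpe)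
    simp only [hf p below, smul_zero]
  · simp only [Finsupp.notMem_support_iff.mp hp, zero_smul]

theorem stmt_12 (e : ℕ) (w : (ℕ × ℕ) →₀ ℤ) (hw : IsOutcome w)
    (hsupp : ∀ p : ℕ × ℕ, w p ≠ 0 → p.1 + p.2 ≤ e) :
    ∑ k ∈ Finset.range (e + 1), (-1 : ℤ) ^ k * w (k, e - k) = 0 := by
  let f : ℕ × ℕ → ℤ[X] := fun p ↦ (1 - X) ^ p.1 * X ^ p.2
  have f_sum_eq_zero : Finsupp.linearCombination ℤ f w = 0 :=
    hw.linearCombination_pow_mul_pow_eq_zero (sub_add_cancel 1 X)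
  calc ∑ k ∈ Finset.range (e + 1), (-1 : ℤ) ^ k * w (k, e - k)
      = ∑ p ∈ antidiagonal e, (-1 : ℤ) ^ p.1 * w p :=
        (Finset.Nat.sum_antidiagonal_eq_sum_range_succ (fun i j ↦ (-1 : ℤ) ^ i * w (i, j)) e).symm
    _ = ∑ p ∈ antidiagonal e, w p • (f p).coeff e := by
        refine Finset.sum_congr rfl fun p hp ↦ ?_
        rw [← mem_antidiagonal.mp hp, coeff_one_sub_X_pow_mul_X_pow_add, smul_eq_mul, mul_comm]
    _ = Finsupp.linearCombination ℤ (lcoeff ℤ e ∘ f) w :=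
        (linearCombination_eq_sum_antidiagonal
          (fun _ hp ↦ coeff_one_sub_X_pow_mul_X_pow_of_add_lt hp) hsupp).symm
    _ = lcoeff ℤ e (Finsupp.linearCombination ℤ f w) :=
        (Finsupp.apply_linearCombination ℤ (lcoeff ℤ e) f w).symm
    _ = 0 := by rw [f_sum_eq_zero, map_zero]
end

section
/- (Invertibility Criterion) Let d ∈ ℕ, let S ⊆ V_d and E ⊆ {0, …, d} be finite sets of the same cardinality, and fix an enumeration of each. Consider the pairing matrix A with rows indexed by a ∈ E and columns indexed by (i,j) ∈ S, whose (a,(i,j)) entry is the binomial coefficient C(d − i − j, a − i) (taken to be 0 when a − i < 0 or a − i > d − i − j). If A has nonzero determinant (over ℚ), then every chipsplitting outcome w with supp(w) ⊆ S is the zero configuration. -/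
/-!
A function `F` on the grid with `F (i, j) = F (i + 1, j) + F (i, j + 1)` pairs to zero with every
splitting move, hence with every outcome. By Pascal's rule, `(i, j) ↦ C(d - i - j, a - i)` is such a
function for every `a`, provided that the binomial coefficients are extended to negative upper
arguments. An outcome supported on `S` is therefore a relation between the columns of the pairing
matrix, and these are linearly independent when the determinant is nonzero.
-/

section PascalFunction

variable {M : Type*} [AddCommGroup M]

/-- `F` is a Pascal function if it satisfies the recursion of Pascal's triangle, written so that its
linear extension to chip configurations kills every splitting move. -/
def IsPascal (F : ℕ × ℕ → M) : Prop :=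
  ∀ i j, F (i, j) = F (i + 1, j) + F (i, j + 1)

theorem IsPascal.pi {ι : Type*} {F : ι → ℕ × ℕ → M} (hF : ∀ a, IsPascal (F a)) :
    IsPascal fun p a ↦ F a p :=
  fun i j ↦ funext fun a ↦ hF a i j

theorem IsPascal.linearCombination_splitMove {F : ℕ × ℕ → M} (hF : IsPascal F) (p : ℕ × ℕ) :
    Finsupp.linearCombination ℤ F (splitMove p) = 0 := by
  simp only [splitMove, map_sub, map_add, Finsupp.linearCombination_single, one_smul]
  exact sub_eq_zero.mpr (hF p.1 p.2).symm

theorem IsOutcome.linearCombination_eq_zero_s14 {w : (ℕ × ℕ) →₀ ℤ} (hw : IsOutcome w)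
    {F : ℕ × ℕ → M} (hF : IsPascal F) : Finsupp.linearCombination ℤ F w = 0 := by
  have closure_le_ker : AddSubgroup.closure (Set.range splitMove) ≤
      (Finsupp.linearCombination ℤ F).toAddMonoidHom.ker := by
    rw [AddSubgroup.closure_le]
    rintro _ ⟨p, rfl⟩
    exact hF.linearCombination_splitMove p
  exact closure_le_ker hw

theorem IsOutcome.eq_zero_of_linearIndepOn {w : (ℕ × ℕ) →₀ ℤ} (hw : IsOutcome w)
    {F : ℕ × ℕ → M} (hF : IsPascal F) {S : Set (ℕ × ℕ)} (hS : LinearIndepOn ℤ F S)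
    (hsupp : ↑w.support ⊆ S) : w = 0 :=
  linearIndepOn_iff.mp hS w hsupp (hw.linearCombination_eq_zero_s14 hF)

end PascalFunction

theorem linearIndepOn_range_of_det_ne_zero (A : Type*) {R ι α : Type*} [CommSemiring A] [CommRing R]
    [IsDomain R] [Algebra A R] [FaithfulSMul A R] [Fintype ι] [DecidableEq ι] {F : ι → α → R}
    {τ : ι → α} (hdet : (Matrix.of fun a b ↦ F a (τ b)).det ≠ 0) :
    LinearIndepOn A (fun p a ↦ F a p) (Set.range τ) := by
  have columns_indep : LinearIndependent R ((fun p a ↦ F a p) ∘ τ) :=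
    Matrix.linearIndependent_cols_of_det_ne_zero hdet
  have τ_injective : Function.Injective τ := columns_indep.injective.of_comp
  exact (linearIndepOn_range_iff τ_injective _).mpr (columns_indep.restrict_scalars' A)

section PairingFunction

variable {R : Type*} [Ring R] [BinomialRing R]

/-- The row of index `a` of the pairing matrix of degree `d`, as a function on the whole grid. The
degree lies in a binomial ring, so that `d - i - j` is a true subtraction and Pascal's rule also
holds outside `V_d`. -/
noncomputable def pairingRow (d : R) (a : ℕ) (p : ℕ × ℕ) : R :=
  if p.1 ≤ a then Ring.choose (d - p.1 - p.2) (a - p.1) else 0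

theorem isPascal_pairingRow (d : R) (a : ℕ) : IsPascal (pairingRow d a) := by
  intro i j
  rcases lt_trichotomy i a with hlt | rfl | hgt
  · obtain ⟨k, rfl⟩ := Nat.exists_eq_add_of_le (Nat.succ_le_of_lt hlt)
    have pascal := Ring.choose_succ_succ (d - i - j - 1) k
    have right : d - (i + 1) - j = d - i - j - 1 := by abel
    have up : d - i - (j + 1) = d - i - j - 1 := by abel
    have le_row : i ≤ i + 1 + k := by omega
    have lower : i + 1 + k - i = k + 1 := by omega
    simpa [pairingRow, right, up, le_row, lower] using pascal
  · simp [pairingRow]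
  · simp [pairingRow, hgt.not_ge, (hgt.trans (Nat.lt_succ_self i)).not_ge]

theorem pairingRow_natCast {d : ℕ} (a : ℕ) {p : ℕ × ℕ} (hp : p.1 + p.2 ≤ d) :
    pairingRow (d : R) a p =
      if p.1 ≤ a then ((d - p.1 - p.2).choose (a - p.1) : R) else 0 := by
  have cast_sub : (d : R) - p.1 - p.2 = (d - p.1 - p.2 : ℕ) := by
    rw [Nat.sub_sub, Nat.cast_sub hp, Nat.cast_add, sub_sub]
  rw [pairingRow, cast_sub, Ring.choose_natCast]

end PairingFunction

theorem stmt_14_general {R ι : Type*} [CommRing R] [IsDomain R] [BinomialRing R] [Fintype ι]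
    [DecidableEq ι] (d : R) (σ : ι → ℕ) (τ : ι → ℕ × ℕ)
    (hdet : (Matrix.of fun a b ↦ pairingRow d (σ a) (τ b)).det ≠ 0)
    (w : (ℕ × ℕ) →₀ ℤ) (hw : IsOutcome w)
    (hsupp : ∀ p : ℕ × ℕ, w p ≠ 0 → p ∈ Set.range τ) : w = 0 := by
  have : IsAddTorsionFree R := BinomialRing.toIsAddTorsionFree
  have : CharZero R := CharZero.of_isAddTorsionFree R R
  exact hw.eq_zero_of_linearIndepOn (.pi fun a ↦ isPascal_pairingRow d (σ a))
    (linearIndepOn_range_of_det_ne_zero ℤ hdet)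
    fun p hp ↦ hsupp p (Finsupp.mem_support_iff.mp hp)

/-- The Invertibility Criterion. `σ` enumerates `E ⊆ {0,…,d}` and `τ` enumerates
`S ⊆ V_d`; the pairing matrix has entries `C(d − i − j, a − i)` (with the convention
that this is `0` when `a − i < 0`, and `Nat.choose` itself vanishes when
`a − i > d − i − j`). -/
theorem stmt_14 (d n : ℕ) (σ : Fin n → ℕ) (τ : Fin n → ℕ × ℕ)
    (hσinj : Function.Injective σ) (hτinj : Function.Injective τ)
    (hσ : ∀ a : Fin n, σ a ≤ d) (hτ : ∀ b : Fin n, (τ b).1 + (τ b).2 ≤ d)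
    (hdet : Matrix.det (Matrix.of fun a b : Fin n =>
        if (τ b).1 ≤ σ a then
          (((d - (τ b).1 - (τ b).2).choose (σ a - (τ b).1) : ℕ) : ℚ)
        else 0) ≠ 0)
    (w : (ℕ × ℕ) →₀ ℤ) (hw : IsOutcome w)
    (hsupp : ∀ p : ℕ × ℕ, w p ≠ 0 → p ∈ Set.range τ) :
    w = 0 := by
  refine stmt_14_general (d : ℚ) σ τ ?_ w hw hsupp
  simpa only [pairingRow_natCast, hτ] using hdet
end

section
/- (Hexagon Criterion) Let d, d', ℓ₁, ℓ₂ be integers with ℓ₁ ≥ d' ≥ 1, ℓ₂ ≥ d', and d' + ℓ₁ + ℓ₂ ≤ d. Let w be a chipsplitting outcome with supp(w) ⊆ V_d such that every (i,j) ∈ supp(w) satisfies i + j ≤ d' or j > d − ℓ₁ or i > d − ℓ₂. Then: (a) the restriction w' defined by w'(i,j) := w(i,j) when i + j ≤ d' and w'(i,j) := 0 otherwise is a chipsplitting outcome; (b) if moreover w is valid, then every (i,j) ∈ supp(w) satisfies i + j ≤ d'. -/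
/-!
Since `x + (1 - x) = 1`, reading a chip at `(i, j)` as `x ^ i * (1 - x) ^ j` kills every splitting
move, and the outcomes are exactly the configurations whose polynomial vanishes. The regions
`i + j ≤ d'`, `j > d - l₁`, `i > d - l₂` give polynomials with `A + B + C = 0`, `deg A ≤ d'`, and
`B`, `C` divisible by large powers of `1 - x` and `x`. Differentiating `d' + 1` times kills `A` and
lowers these powers by only `d' + 1`, so the derivative of `C` is divisible by more than its degree
allows and vanishes. Then `deg C ≤ d'`, which forces `C = 0`, and `A = -B` vanishes likewise. For a
valid outcome the last two regions carry no negative chips, so evaluating at `x = 1/2` shows that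
they are empty.
-/

section Polynomials

open Polynomial

theorem natDegree_one_sub_X {R : Type*} [Ring R] [Nontrivial R] : (1 - X : R[X]).natDegree = 1 := by
  rw [← neg_sub, natDegree_neg, ← C_1, natDegree_X_sub_C]

theorem natDegree_iterate_derivative_eq {R : Type*} [Semiring R] [IsAddTorsionFree R] (f : R[X])
    (k : ℕ) : (derivative^[k] f).natDegree = f.natDegree - k := by
  induction k with
  | zero => rfl
  | succ k ih => rw [Function.iterate_succ_apply', natDegree_derivative, ih, Nat.sub_sub]

theorem iterate_derivative_succ_eq_zero_iff {R : Type*} [Semiring R] [IsAddTorsionFree R] {f : R[X]}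
    {k : ℕ} : derivative^[k + 1] f = 0 ↔ f.natDegree ≤ k := by
  rw [Function.iterate_succ_apply', derivative_eq_zero, natDegree_iterate_derivative_eq,
    Nat.sub_eq_zero_iff_le]

theorem eq_zero_of_pow_dvd_of_natDegree_lt {R : Type*} [Semiring R] [NoZeroDivisors R] {p f : R[X]}
    {n : ℕ} (hp : 0 < p.natDegree) (hpf : p ^ n ∣ f) (hf : f.natDegree < n) : f = 0 := by
  refine eq_zero_of_dvd_of_natDegree_lt hpf (hf.trans_le ?_)
  rw [natDegree_pow]
  exact Nat.le_mul_of_pos_right n hp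

theorem eq_zero_of_coprime_pow_dvd_of_natDegree_lt {R : Type*} [CommSemiring R]
    [NoZeroDivisors R] {p q f : R[X]} {a b : ℕ} (hpq : IsCoprime p q) (hp : 0 < p.natDegree)
    (hq : 0 < q.natDegree) (hpf : p ^ a ∣ f) (hqf : q ^ b ∣ f) (hf : f.natDegree < a + b) :
    f = 0 := by
  refine eq_zero_of_dvd_of_natDegree_lt (hpq.pow.mul_dvd hpf hqf) (hf.trans_le ?_)
  have hp0 : p ≠ 0 := ne_zero_of_natDegree_gt hp
  have hq0 : q ≠ 0 := ne_zero_of_natDegree_gt hq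
  rw [natDegree_mul (pow_ne_zero a hp0) (pow_ne_zero b hq0), natDegree_pow, natDegree_pow]
  exact add_le_add (Nat.le_mul_of_pos_right a hp) (Nat.le_mul_of_pos_right b hq)

theorem eq_zero_of_add_add_eq_zero_of_pow_dvd {R : Type*} [CommRing R] [NoZeroDivisors R]
    [IsAddTorsionFree R] {p q A B C : R[X]} {k m n : ℕ}
    (hpq : IsCoprime p q) (hp : 0 < p.natDegree) (hq : 0 < q.natDegree) (hA : A.natDegree ≤ k)
    (hB : p ^ m ∣ B) (hC : q ^ n ∣ C) (hkm : k < m) (hkn : k < n)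
    (hdeg : C.natDegree + k + 1 < m + n) (hsum : A + B + C = 0) : A = 0 ∧ B = 0 ∧ C = 0 := by
  have hC_deg : C.natDegree ≤ k := by
    by_contra! hCk
    have hsum' : derivative^[k + 1] B + derivative^[k + 1] C = 0 := by
      simpa only [iterate_map_add, iterate_derivative_succ_eq_zero_iff.2 hA, zero_add,
        iterate_map_zero] using congrArg derivative^[k + 1] hsum
    have hpC : p ^ (m - (k + 1)) ∣ derivative^[k + 1] C := by
      rw [← dvd_neg, ← eq_neg_of_add_eq_zero_left hsum']
      exact pow_sub_dvd_iterate_derivative_of_pow_dvd _ hB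
    have hqC : q ^ (n - (k + 1)) ∣ derivative^[k + 1] C :=
      pow_sub_dvd_iterate_derivative_of_pow_dvd _ hC
    refine hCk.not_ge (iterate_derivative_succ_eq_zero_iff.1 ?_)
    refine eq_zero_of_coprime_pow_dvd_of_natDegree_lt hpq hp hq hpC hqC ?_
    rw [natDegree_iterate_derivative_eq]
    omega
  obtain rfl : C = 0 := eq_zero_of_pow_dvd_of_natDegree_lt hq hC (hC_deg.trans_lt hkn)
  rw [add_zero] at hsum
  obtain rfl : A = 0 := by
    refine eq_zero_of_pow_dvd_of_natDegree_lt hp ?_ (hA.trans_lt hkm)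
    rwa [eq_neg_of_add_eq_zero_left hsum, dvd_neg]
  exact ⟨rfl, by simpa only [zero_add] using hsum, rfl⟩

end Polynomials

section Configurations

open Polynomial

/-- The polynomial `∑ w (i, j) * x ^ i * (1 - x) ^ j` of a configuration `w`. It identifies the
configurations modulo splitting moves with `ℤ[x]`. -/
noncomputable def chipPoly : ((ℕ × ℕ) →₀ ℤ) →ₗ[ℤ] ℤ[X] :=
  Finsupp.linearCombination ℤ fun p => X ^ p.1 * (1 - X) ^ p.2

/-- The configuration on the bottom row `j = 0` whose chip counts are the coefficients of a
polynomial: a section of `chipPoly`, giving the normal form of a configuration modulo splitting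
moves. -/
noncomputable def bottomRow : ℤ[X] →ₗ[ℤ] ((ℕ × ℕ) →₀ ℤ) :=
  (basisMonomials ℤ).constr ℤ fun i => Finsupp.single (i, 0) 1

theorem chipPoly_single (p : ℕ × ℕ) (a : ℤ) :
    chipPoly (Finsupp.single p a) = a • (X ^ p.1 * (1 - X) ^ p.2) :=
  Finsupp.linearCombination_single ℤ a p

theorem chipPoly_splitMove (p : ℕ × ℕ) : chipPoly (splitMove p) = 0 := by
  simp only [splitMove, map_add, map_sub, chipPoly_single, one_smul]
  ring

theorem bottomRow_X_pow (i : ℕ) : bottomRow (X ^ i) = Finsupp.single (i, 0) 1 := by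
  rw [bottomRow, ← monomial_one_right_eq_X_pow, ← congrFun (coe_basisMonomials ℤ) i,
    Module.Basis.constr_basis]

theorem isOutcome_single_sub_bottomRow (i j : ℕ) :
    IsOutcome (Finsupp.single (i, j) 1 - bottomRow (X ^ i * (1 - X) ^ j)) := by
  induction j generalizing i with
  | zero =>
    rw [pow_zero, mul_one, bottomRow_X_pow, sub_self]
    exact zero_mem _
  | succ j ih =>
    have hmove : IsOutcome (splitMove (i, j)) := AddSubgroup.subset_closure ⟨(i, j), rfl⟩
    have hpoly : (X : ℤ[X]) ^ i * (1 - X) ^ (j + 1) =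
        X ^ i * (1 - X) ^ j - X ^ (i + 1) * (1 - X) ^ j := by ring
    have hsplit : Finsupp.single (i, j + 1) 1 - bottomRow (X ^ i * (1 - X) ^ (j + 1)) =
        splitMove (i, j) + ((Finsupp.single (i, j) 1 - bottomRow (X ^ i * (1 - X) ^ j)) -
          (Finsupp.single (i + 1, j) 1 - bottomRow (X ^ (i + 1) * (1 - X) ^ j))) := by
      rw [hpoly, map_sub, splitMove]
      abel
    rw [hsplit]
    exact add_mem hmove (sub_mem (ih i) (ih (i + 1)))

theorem isOutcome_sub_bottomRow_chipPoly (w : (ℕ × ℕ) →₀ ℤ) :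
    IsOutcome (w - bottomRow (chipPoly w)) := by
  induction w using Finsupp.induction_linear with
  | zero =>
    rw [map_zero, map_zero, sub_zero]
    exact zero_mem _
  | add v w hv hw =>
    rw [map_add, map_add, add_sub_add_comm]
    exact add_mem hv hw
  | single p a =>
    rw [chipPoly_single, map_smul, ← Finsupp.smul_single_one, ← smul_sub]
    exact zsmul_mem (isOutcome_single_sub_bottomRow p.1 p.2) a

theorem isOutcome_iff_chipPoly_eq_zero {w : (ℕ × ℕ) →₀ ℤ} : IsOutcome w ↔ chipPoly w = 0 := by
  refine ⟨fun hw => ?_, fun hw => ?_⟩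
  · have hle : AddSubgroup.closure (Set.range splitMove) ≤ chipPoly.toAddMonoidHom.ker :=
      (AddSubgroup.closure_le _).2 (Set.range_subset_iff.2 chipPoly_splitMove)
    exact hle hw
  · simpa only [hw, map_zero, sub_zero] using isOutcome_sub_bottomRow_chipPoly w

theorem dvd_chipPoly {w : (ℕ × ℕ) →₀ ℤ} {q : ℤ[X]}
    (h : ∀ p ∈ w.support, q ∣ X ^ p.1 * (1 - X) ^ p.2) : q ∣ chipPoly w :=
  Finset.dvd_sum fun p hp => dvd_smul_of_dvd (w p) (h p hp)

theorem natDegree_chipPoly_le {w : (ℕ × ℕ) →₀ ℤ} {k : ℕ}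
    (h : ∀ p ∈ w.support, p.1 + p.2 ≤ k) : (chipPoly w).natDegree ≤ k := by
  refine natDegree_sum_le_of_forall_le _ _ fun p hp => (natDegree_smul_le _ _).trans ?_
  refine natDegree_mul_le.trans ?_
  simpa only [natDegree_pow, natDegree_X, natDegree_one_sub_X, mul_one] using h p hp

theorem IsOutcome.of_add_add {u v w : (ℕ × ℕ) →₀ ℤ} {d k m n : ℕ} (huvw : IsOutcome (u + v + w))
    (hu : ∀ p ∈ u.support, p.1 + p.2 ≤ k) (hv : ∀ p ∈ v.support, m ≤ p.2)
    (hw : ∀ p ∈ w.support, n ≤ p.1) (hwd : ∀ p ∈ w.support, p.1 + p.2 ≤ d)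
    (hkm : k < m) (hkn : k < n) (hd : d + k + 1 < m + n) :
    IsOutcome u ∧ IsOutcome v ∧ IsOutcome w := by
  simp only [isOutcome_iff_chipPoly_eq_zero, map_add] at huvw ⊢
  have hcop : IsCoprime (1 - X : ℤ[X]) X := ⟨1, 1, by ring⟩
  have hv_dvd : (1 - X) ^ m ∣ chipPoly v :=
    dvd_chipPoly fun p hp => (pow_dvd_pow _ (hv p hp)).mul_left _
  have hw_dvd : X ^ n ∣ chipPoly w :=
    dvd_chipPoly fun p hp => (pow_dvd_pow _ (hw p hp)).mul_right _
  have hw_deg : (chipPoly w).natDegree ≤ d := natDegree_chipPoly_le hwd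
  exact eq_zero_of_add_add_eq_zero_of_pow_dvd hcop (by simp [natDegree_one_sub_X]) (by simp)
    (natDegree_chipPoly_le hu) hv_dvd hw_dvd hkm hkn (by omega) huvw

theorem aeval_half_chipPoly (w : (ℕ × ℕ) →₀ ℤ) :
    aeval (1 / 2 : ℚ) (chipPoly w) = w.sum fun p a => (a : ℚ) * (1 / 2) ^ (p.1 + p.2) := by
  rw [chipPoly, Finsupp.linearCombination_apply, map_finsuppSum]
  refine Finsupp.sum_congr fun p _ => ?_
  simp only [map_mul, map_pow, map_sub, map_one, aeval_X, zsmul_eq_mul, pow_add]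
  norm_num

theorem IsOutcome.eq_zero_of_nonneg {w : (ℕ × ℕ) →₀ ℤ} (hw : IsOutcome w) (hnonneg : 0 ≤ w) :
    w = 0 := by
  have hsum : w.sum (fun p a => (a : ℚ) * (1 / 2) ^ (p.1 + p.2)) = 0 := by
    rw [← aeval_half_chipPoly, isOutcome_iff_chipPoly_eq_zero.1 hw, map_zero]
  have hterm_nonneg : ∀ p ∈ w.support, 0 ≤ (w p : ℚ) * (1 / 2) ^ (p.1 + p.2) := fun p _ =>
    mul_nonneg (Int.cast_nonneg (hnonneg p)) (by positivity)
  ext p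
  by_contra hp
  have hterm : (w p : ℚ) * (1 / 2) ^ (p.1 + p.2) = 0 :=
    (Finset.sum_eq_zero_iff_of_nonneg hterm_nonneg).1 hsum p (Finsupp.mem_support_iff.2 hp)
  exact hp (by simpa using hterm)

theorem IsValid.filter_nonneg {w : (ℕ × ℕ) →₀ ℤ} (hw : IsValid w) {P : ℕ × ℕ → Prop}
    [DecidablePred P] (hP : ¬ P (0, 0)) : 0 ≤ w.filter P := by
  intro p
  rw [Finsupp.filter_apply]
  split_ifs with hp
  · exact not_lt.1 fun hneg => hP (hw p hneg ▸ hp)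
  · exact le_rfl

end Configurations

theorem filter_add_filter_add_filter_eq_self {α M : Type*} [AddZeroClass M] {f : α →₀ M}
    {P Q R : α → Prop} [DecidablePred P] [DecidablePred Q] [DecidablePred R]
    (hcover : ∀ a, f a ≠ 0 → P a ∨ Q a ∨ R a) (hPQ : ∀ a, f a ≠ 0 → P a → ¬ Q a)
    (hPR : ∀ a, f a ≠ 0 → P a → ¬ R a) (hQR : ∀ a, f a ≠ 0 → Q a → ¬ R a) :
    f.filter P + f.filter Q + f.filter R = f := by
  ext a
  simp only [Finsupp.add_apply, Finsupp.filter_apply]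
  by_cases ha : f a = 0
  · simp [ha]
  · rcases hcover a ha with hP | hQ | hR
    · simp [hP, hPQ a ha hP, hPR a ha hP]
    · have hP : ¬ P a := fun hP => hPQ a ha hP hQ
      simp [hP, hQ, hQR a ha hQ]
    · have hP : ¬ P a := fun hP => hPR a ha hP hR
      have hQ : ¬ Q a := fun hQ => hQR a ha hQ hR
      simp [hP, hQ, hR]

theorem stmt_15_general (d d' l₁ l₂ : ℕ) (hsum : d' + l₁ + l₂ ≤ d)
    (w : (ℕ × ℕ) →₀ ℤ) (hw : IsOutcome w)
    (hsupp : ∀ p : ℕ × ℕ, w p ≠ 0 → p.1 + p.2 ≤ d)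
    (hhex : ∀ p : ℕ × ℕ, w p ≠ 0 →
      p.1 + p.2 ≤ d' ∨ d - l₁ < p.2 ∨ d - l₂ < p.1) :
    (∀ w' : (ℕ × ℕ) →₀ ℤ,
      (∀ p : ℕ × ℕ, w' p = if p.1 + p.2 ≤ d' then w p else 0) → IsOutcome w') ∧
    (IsValid w → ∀ p : ℕ × ℕ, w p ≠ 0 → p.1 + p.2 ≤ d') := by
  have hsplit : w.filter (fun p => p.1 + p.2 ≤ d') + w.filter (fun p => d - l₁ < p.2) +
      w.filter (fun p => d - l₂ < p.1) = w :=
    filter_add_filter_add_filter_eq_self hhex (by omega) (by omega)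
      fun p hp _ _ => by have := hsupp p hp; omega
  obtain ⟨hcorner, htop, hright⟩ :=
    IsOutcome.of_add_add (d := d) (k := d') (m := d - l₁ + 1) (n := d - l₂ + 1)
      (hsplit.symm ▸ hw) (by simp) (by simp) (by simp)
      (by simpa using fun i j hij _ => hsupp (i, j) hij) (by omega) (by omega) (by omega)
  refine ⟨fun w' hw' => ?_, fun hvalid p hp => ?_⟩
  · convert hcorner
    ext p
    rw [hw', Finsupp.filter_apply]
  · have htop_empty := (Finsupp.filter_eq_zero_iff _ _).1
      (htop.eq_zero_of_nonneg (hvalid.filter_nonneg (Nat.not_lt_zero _)))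
    have hright_empty := (Finsupp.filter_eq_zero_iff _ _).1
      (hright.eq_zero_of_nonneg (hvalid.filter_nonneg (Nat.not_lt_zero _)))
    exact (hhex p hp).resolve_right (not_or.2 ⟨mt (htop_empty p) hp, mt (hright_empty p) hp⟩)

/-- The Hexagon Criterion. -/
theorem stmt_15 (d d' l₁ l₂ : ℕ) (hd' : 1 ≤ d') (h₁ : d' ≤ l₁) (h₂ : d' ≤ l₂)
    (hsum : d' + l₁ + l₂ ≤ d)
    (w : (ℕ × ℕ) →₀ ℤ) (hw : IsOutcome w)
    (hsupp : ∀ p : ℕ × ℕ, w p ≠ 0 → p.1 + p.2 ≤ d)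
    (hhex : ∀ p : ℕ × ℕ, w p ≠ 0 →
      p.1 + p.2 ≤ d' ∨ d - l₁ < p.2 ∨ d - l₂ < p.1) :
    (∀ w' : (ℕ × ℕ) →₀ ℤ,
      (∀ p : ℕ × ℕ, w' p = if p.1 + p.2 ≤ d' then w p else 0) → IsOutcome w') ∧
    (IsValid w → ∀ p : ℕ × ℕ, w p ≠ 0 → p.1 + p.2 ≤ d') :=
  stmt_15_general d d' l₁ l₂ hsum w hw hsupp hhex
end
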